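/- There exists a unique ζ₀ ∈ (0, π) such that φ(ζ₀) = 1, where φ(ζ) = (sin ζ / ζ)·(2 − cos ζ). -/

import Mathlib

open MeasureTheory Real Set Filter
open scoped ENNReal

noncomputable section

lemma g_deriv (x : ℝ) : HasDerivAt (fun x : ℝ => sin x * (2 - cos x) - x)
    (2 * cos x * (1 - cos x)) x := by
  have h := ((hasDerivAt_sin x).mul ((hasDerivAt_cos x).const_sub 2)).sub (hasDerivAt_id x)
  refine h.congr_deriv ?_
  have := sin_sq_add_cos_sq x
  nlinarith

lemma g_cont : Continuous (fun x : ℝ => sin x * (2 - cos x) - x) := by fun_prop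

lemma g_mono : StrictMonoOn (fun x : ℝ => sin x * (2 - cos x) - x) (Icc 0 (π / 2)) := by
  apply strictMonoOn_of_deriv_pos (convex_Icc _ _) g_cont.continuousOn
  intro x hx
  rw [interior_Icc] at hx
  rw [(g_deriv x).deriv]
  have h1 : 0 < cos x := cos_pos_of_mem_Ioo ⟨by linarith [hx.1, pi_pos], hx.2⟩
  have h2 : cos x < cos 0 :=
    cos_lt_cos_of_nonneg_of_le_pi (le_refl 0) (by linarith [hx.2, pi_pos]) hx.1
  rw [cos_zero] at h2
  have : 0 < 1 - cos x := by linarith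
  positivity

lemma g_anti : StrictAntiOn (fun x : ℝ => sin x * (2 - cos x) - x) (Icc (π / 2) π) := by
  apply strictAntiOn_of_deriv_neg (convex_Icc _ _) g_cont.continuousOn
  intro x hx
  rw [interior_Icc] at hx
  rw [(g_deriv x).deriv]
  have h1 : cos x < 0 :=
    cos_neg_of_pi_div_two_lt_of_lt hx.1 (by linarith [hx.2, pi_pos])
  nlinarith

/-- The equation `φ(ζ) = 1` with `φ(ζ) = (sin ζ / ζ)(2 − cos ζ)` has a
unique root in `(0, π)`. -/
theorem stmt12 :
    ∃! ζ₀ : ℝ, ζ₀ ∈ Set.Ioo 0 π ∧ (Real.sin ζ₀ / ζ₀) * (2 - Real.cos ζ₀) = 1 := by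
  have key : ∀ x : ℝ, 0 < x → ((Real.sin x / x) * (2 - Real.cos x) = 1 ↔
      sin x * (2 - cos x) - x = 0) := by
    intro x hx
    rw [div_mul_eq_mul_div, div_eq_one_iff_eq hx.ne', sub_eq_zero]
  have hpi := pi_pos
  have big : ∀ x : ℝ, 0 < x → sin x * (2 - cos x) - x = 0 → π / 2 < x := by
    intro x hx h0
    by_contra! hle
    have := g_mono ⟨le_refl 0, by linarith⟩ ⟨hx.le, hle⟩ hx
    simp only [sin_zero] at this
    linarith
  have hiv := intermediate_value_Ioo' (by linarith : π / 2 ≤ π) (g_cont.continuousOn (s := Icc (π / 2) π))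
  have h0 : (0 : ℝ) ∈ Ioo (sin π * (2 - cos π) - π) (sin (π / 2) * (2 - cos (π / 2)) - π / 2) := by
    simp only [sin_pi, sin_pi_div_two, cos_pi_div_two]
    constructor <;> linarith [pi_lt_four]
  obtain ⟨z, hz, hz0⟩ := hiv h0
  have zpos : 0 < z := by linarith [hz.1]
  refine ⟨z, ⟨⟨zpos, hz.2⟩, (key z zpos).2 hz0⟩, ?_⟩
  rintro y ⟨hy, hy1⟩
  have hy0 := (key y hy.1).1 hy1
  exact g_anti.injOn ⟨(big y hy.1 hy0).le, hy.2.le⟩ ⟨hz.1.le, hz.2.le⟩ (hy0.trans hz0.symm)
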